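/- (Theorem 1, part (i), uniqueness) Suppose (g_n^*) is an optimal configuration with overall channel h^* ≠ 0, and let n be an element with v_n ≠ 0. If i is an index such that ang(h^*, F_{n,i}) ≤ ang(h^*, F_{n,l}) for every l ∈ {1,…,K} and ang(h^*, F_{n,i}) < π/2, then for every l ≠ i we have ang(h^*, F_{n,l}) > ang(h^*, F_{n,i}); that is, F_{n,i} is the only vector among F_{n,1}, …, F_{n,K} having the smallest angle with h^*. -/

import Mathlib

/-- The angle in `[0,π]` between two nonzero complex numbers regarded as plane vectors:
`ang a b = arccos (Re (a * conj b) / (|a| * |b|))`. -/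
noncomputable def ang (a b : ℂ) : ℝ :=
  Real.arccos ((a * (starRingEnd ℂ) b).re / (‖a‖ * ‖b‖))

/-!
Since `‖h + d‖² = ‖h‖² + 2⟪h, d⟫ + ‖d‖²`, a nonzero change `d` with `0 ≤ ⟪h, d⟫` strictly
lengthens `h`. An optimal configuration admits no such change, so any option of element `n`
whose inner product with the optimal channel is at least that of the current choice `g n` must
be `g n` itself. Among vectors of equal norm, the ones at the smallest angle to the channel are
those with the largest inner product, and an angle below `π / 2` makes this product positive,
hence larger than that of the choice `0`. Every minimizer of the angle is therefore equal to
`g n`.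
-/

open InnerProductGeometry
open scoped RealInnerProductSpace

section InnerProductSpace

variable {E : Type*} [NormedAddCommGroup E] [InnerProductSpace ℝ E]

theorem eq_zero_of_norm_add_le_of_inner_nonneg {x y : E} (hle : ‖x + y‖ ≤ ‖x‖)
    (hinner : 0 ≤ ⟪x, y⟫) : y = 0 := by
  have hsq : ‖x + y‖ ^ 2 ≤ ‖x‖ ^ 2 := by gcongr
  rw [norm_add_sq_real] at hsq
  exact norm_eq_zero.mp (pow_eq_zero_iff two_ne_zero |>.mp (by nlinarith [sq_nonneg ‖y‖]))

theorem inner_le_inner_of_angle_le_angle {x y z : E} (hnorm : ‖y‖ = ‖z‖)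
    (hangle : angle x y ≤ angle x z) : ⟪x, z⟫ ≤ ⟪x, y⟫ := by
  rw [← cos_angle_mul_norm_mul_norm x y, ← cos_angle_mul_norm_mul_norm x z, hnorm]
  gcongr
  exact Real.cos_le_cos_of_nonneg_of_le_pi (angle_nonneg x y) (angle_le_pi x z) hangle

theorem inner_pos_of_angle_lt_pi_div_two {x y : E} (hangle : angle x y < Real.pi / 2) :
    0 < ⟪x, y⟫ := by
  by_contra! hinner
  exact (Real.arccos_lt_pi_div_two.mp hangle).not_ge
    (div_nonpos_of_nonpos_of_nonneg hinner (by positivity))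

end InnerProductSpace

theorem sum_update_eq_sum_add_sub {ι M : Type*} [Fintype ι] [DecidableEq ι] [AddCommGroup M]
    (g : ι → M) (n : ι) (x : M) :
    ∑ m, Function.update g n x m = ∑ m, g m + (x - g n) := by
  rw [Finset.sum_update_of_mem (Finset.mem_univ n), ← Finset.erase_eq,
    Finset.sum_erase_eq_sub (Finset.mem_univ n)]
  abel

section Configuration

variable {ι E : Type*} [Fintype ι] [NormedAddCommGroup E] [InnerProductSpace ℝ E]

theorem eq_of_isMaxOn_norm_add_sum_of_inner_le {C : ι → Set E} {h₀ : E} {g : ι → E}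
    (hg : g ∈ Set.univ.pi C) (hmax : IsMaxOn (fun g' ↦ ‖h₀ + ∑ m, g' m‖) (Set.univ.pi C) g)
    {n : ι} {x : E} (hx : x ∈ C n) (hinner : ⟪h₀ + ∑ m, g m, g n⟫ ≤ ⟪h₀ + ∑ m, g m, x⟫) :
    x = g n := by
  classical
  have hupdate : Function.update g n x ∈ Set.univ.pi C :=
    Set.update_mem_pi_iff_of_mem hg |>.mpr fun _ ↦ hx
  have hle : ‖h₀ + ∑ m, g m + (x - g n)‖ ≤ ‖h₀ + ∑ m, g m‖ := by
    simpa only [sum_update_eq_sum_add_sub, ← add_assoc] using isMaxOn_iff.mp hmax _ hupdate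
  refine sub_eq_zero.mp (eq_zero_of_norm_add_le_of_inner_nonneg hle ?_)
  rwa [inner_sub_right, sub_nonneg]

theorem stmt_6_general {κ : Type*} {h_d : E} {F : ι → κ → E} {g : ι → E}
    (hg : ∀ m, g m = 0 ∨ ∃ i, g m = F m i)
    (hopt : ∀ g' : ι → E, (∀ m, g' m = 0 ∨ ∃ i, g' m = F m i) →
      ‖h_d + ∑ m, g' m‖ ≤ ‖h_d + ∑ m, g m‖)
    (_hstar : h_d + ∑ m, g m ≠ 0) {n : ι} {i : κ} (hnorm : ∀ l, ‖F n l‖ = ‖F n i‖)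
    (hmin : ∀ l, angle (h_d + ∑ m, g m) (F n i) ≤ angle (h_d + ∑ m, g m) (F n l))
    (hang : angle (h_d + ∑ m, g m) (F n i) < Real.pi / 2) {l : κ} (hne : F n l ≠ F n i) :
    angle (h_d + ∑ m, g m) (F n i) < angle (h_d + ∑ m, g m) (F n l) := by
  have eq_choice {k : κ} (hk : ⟪h_d + ∑ m, g m, g n⟫ ≤ ⟪h_d + ∑ m, g m, F n k⟫) : F n k = g n :=
    eq_of_isMaxOn_norm_add_sum_of_inner_le (C := fun m ↦ {x | x = 0 ∨ ∃ j, x = F m j})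
      (fun m _ ↦ hg m) (fun g' hg' ↦ hopt g' fun m ↦ hg' m trivial) (Or.inr ⟨k, rfl⟩) hk
  have choice_le : ⟪h_d + ∑ m, g m, g n⟫ ≤ ⟪h_d + ∑ m, g m, F n i⟫ := by
    rcases hg n with hzero | ⟨k, hk⟩
    · simpa only [hzero, inner_zero_right] using (inner_pos_of_angle_lt_pi_div_two hang).le
    · simpa only [hk] using inner_le_inner_of_angle_le_angle (hnorm k).symm (hmin k)
  by_contra! hle
  have le_of_tie := inner_le_inner_of_angle_le_angle (hnorm l) hle
  exact hne ((eq_choice (choice_le.trans le_of_tie)).trans (eq_choice choice_le).symm)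

end Configuration

theorem ang_eq_angle (a b : ℂ) : ang a b = angle a b := by
  rw [ang, angle_comm, angle, Complex.inner, mul_comm ‖b‖]

theorem norm_mul_exp_ofReal_mul_I (z : ℂ) (θ : ℝ) : ‖z * Complex.exp (θ * Complex.I)‖ = ‖z‖ := by
  rw [norm_mul, Complex.norm_exp_ofReal_mul_I, mul_one]

theorem injOn_mul_exp_ofReal_mul_I {z : ℂ} (hz : z ≠ 0) :
    Set.InjOn (fun θ : ℝ ↦ z * Complex.exp (θ * Complex.I)) (Set.Ico 0 (2 * Real.pi)) :=
  fun _ hx _ hy hxy ↦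
    Circle.exp_injOn_Ico (sub_zero _).le hx hy (Circle.ext (mul_left_cancel₀ hz hxy))

/-- Theorem 1 part (i), uniqueness: if `F n i` has the smallest angle with `h^*` and that
angle is `< π/2`, then `F n i` is the unique minimizer of the angle with `h^*`. -/
theorem stmt_6
    {N K : ℕ} (hN : 0 < N) (hK : 0 < K)
    (h_d : ℂ) (v : Fin N → ℂ) (φ : Fin K → ℝ)
    (hφinj : Function.Injective φ)
    (hφrange : ∀ i, 0 ≤ φ i ∧ φ i < 2 * Real.pi)
    (F : Fin N → Fin K → ℂ)
    (hF : ∀ m i, F m i = v m * Complex.exp ((φ i : ℂ) * Complex.I))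
    (g : Fin N → ℂ)
    (hg : ∀ m, g m = 0 ∨ ∃ i, g m = F m i)
    (hopt : ∀ g' : Fin N → ℂ, (∀ m, g' m = 0 ∨ ∃ i, g' m = F m i) →
      ‖h_d + ∑ m, g' m‖ ≤ ‖h_d + ∑ m, g m‖)
    (hstar : h_d + ∑ m, g m ≠ 0)
    (n : Fin N) (hvn : v n ≠ 0)
    (i : Fin K)
    (hmin : ∀ l, ang (h_d + ∑ m, g m) (F n i) ≤ ang (h_d + ∑ m, g m) (F n l))
    (hang : ang (h_d + ∑ m, g m) (F n i) < Real.pi / 2) :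
    ∀ l, l ≠ i → ang (h_d + ∑ m, g m) (F n i) < ang (h_d + ∑ m, g m) (F n l) := by
  intro l hl
  simp only [ang_eq_angle] at hmin hang ⊢
  refine stmt_6_general hg hopt hstar (fun k ↦ ?_) hmin hang fun hF_eq ↦ hl (hφinj ?_)
  · simp only [hF, norm_mul_exp_ofReal_mul_I]
  · exact injOn_mul_exp_ofReal_mul_I hvn (hφrange l) (hφrange i) (by simpa only [hF] using hF_eq)
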